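/- For every n ≥ 1 and all β_1, β_2 ∈ ι_n(B_n) ⊆ B_{n+1}, the braid β_1σ_n^{−1}β_2σ_n can be obtained from β_1σ_nβ_2σ_n^{−1} by a finite sequence of moves consisting of conjugations, exactly one positive stabilization, and exactly one positive destabilization; likewise, it can be obtained by a finite sequence consisting of conjugations, exactly one negative stabilization, and exactly one negative destabilization. In particular, any exchange move can be decomposed into conjugations, one stabilization and one destabilization of the same, arbitrarily prescribed, sign; in the positive case this is witnessed by the identity σ_n^{−2}σ_{n+1}^{−1}·(ι_{n+1}(β_2)σ_n^{−2}σ_{n+1}σ_nι_{n+1}(β_1)σ_n)·σ_{n+1}σ_n^2 = σ_n^{−2}ι_{n+1}(β_2)σ_nι_{n+1}(β_1)σ_nσ_{n+1} in B_{n+2}. -/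

import Mathlib

noncomputable section

/-- The braid relations on countably many Artin generators `σ_0, σ_1, σ_2, …`
(the generators of the braid group on `n` strands being `σ_0, …, σ_{n-2}`). -/
def braidRels : Set (FreeGroup ℕ) :=
  {r | (∃ i : ℕ, r = FreeGroup.of i * FreeGroup.of (i + 1) * FreeGroup.of i *
          (FreeGroup.of (i + 1) * FreeGroup.of i * FreeGroup.of (i + 1))⁻¹) ∨
       (∃ i j : ℕ, i + 2 ≤ j ∧
          r = FreeGroup.of i * FreeGroup.of j * (FreeGroup.of j * FreeGroup.of i)⁻¹)}

/-- The stable braid group (union of all braid groups). -/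
abbrev BInf : Type := PresentedGroup braidRels

/-- The Artin generator `σ_i`. -/
def σBI (i : ℕ) : BInf := PresentedGroup.of i

/-- The braid group on `n` strands, realized as the subgroup generated by
`σ_0, …, σ_{n-2}`. -/
def B (n : ℕ) : Subgroup BInf := Subgroup.closure {x | ∃ i, i + 2 ≤ n ∧ x = σBI i}
/-- A braid with a specified number of strands. -/
abbrev BraidP : Type := ℕ × BInf

/-- The braid of the pair indeed lies in the braid group with the specified number of
strands. -/
def PMem (p : BraidP) : Prop := p.2 ∈ B p.1

/-- Conjugation within the braid group on `n` strands. -/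
def ConjM (n : ℕ) (x y : BInf) : Prop :=
  x ∈ B n ∧ y ∈ B n ∧ ∃ g ∈ B n, y = g * x * g⁻¹

/-- A positive (`s = true`) or negative (`s = false`) Markov stabilization:  a braid on
`k + 1` strands is multiplied by `σ_k^{±1}`, giving a braid on `k + 2` strands. -/
def StabM (s : Bool) (p q : BraidP) : Prop :=
  ∃ k : ℕ, p.1 = k + 1 ∧ q.1 = k + 2 ∧
    q.2 = p.2 * (if s then σBI k else (σBI k)⁻¹)

/-- One Markov move: a conjugation, or a stabilization of either sign. -/
def MarkovStep (p q : BraidP) : Prop :=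
  PMem p ∧ PMem q ∧
    ((p.1 = q.1 ∧ ConjM p.1 p.2 q.2) ∨ StabM true p q ∨ StabM false p q)

/-- Markov equivalence: the closures of the braids are equivalent oriented links. -/
def MarkovEquiv : BraidP → BraidP → Prop := Relation.EqvGen MarkovStep

/-- One positive Markov move: a conjugation or a positive stabilization. -/
def PosMarkovStep (p q : BraidP) : Prop :=
  PMem p ∧ PMem q ∧ ((p.1 = q.1 ∧ ConjM p.1 p.2 q.2) ∨ StabM true p q)

/-- Positive Markov equivalence: conjugations and positive stabilizations and
destabilizations only (transversal equivalence of the associated transversal links). -/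
def PosMarkovEquiv : BraidP → BraidP → Prop := Relation.EqvGen PosMarkovStep

/-- An exchange move within the braid group on `n = k + 2` strands:
`b₁ σ b₂ σ⁻¹ ↦ b₁ σ⁻¹ b₂ σ`, where `σ = σ_k` is the last generator and `b₁`, `b₂` are braids
on `k + 1` strands. -/
def ExchM (n : ℕ) (x y : BInf) : Prop :=
  ∃ (k : ℕ) (b₁ b₂ : BInf), n = k + 2 ∧ b₁ ∈ B (k + 1) ∧ b₂ ∈ B (k + 1) ∧
    x = b₁ * σBI k * b₂ * (σBI k)⁻¹ ∧ y = b₁ * (σBI k)⁻¹ * b₂ * σBI k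

/-- The Birman–Menasco equivalence on the braid group on `n` strands: generated by
conjugations and exchange moves.  `BMEquiv n β` is the Birman–Menasco class of `β`. -/
def BMEquiv (n : ℕ) : BInf → BInf → Prop :=
  Relation.EqvGen (fun x y => ConjM n x y ∨ ExchM n x y ∨ ExchM n y x)

/-- A stabilization (`BMMove s p q`) of sign `s` relating the Birman–Menasco class of `p` to
that of `q`: some braid in the class of `p` stabilizes to some braid in the class of `q`. -/
def BMMove (s : Bool) (p q : BraidP) : Prop :=
  ∃ (k : ℕ) (x : BInf), p.1 = k + 1 ∧ q.1 = k + 2 ∧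
    x ∈ B (k + 1) ∧ p.2 ∈ B (k + 1) ∧ q.2 ∈ B (k + 2) ∧
    BMEquiv (k + 1) p.2 x ∧
    BMEquiv (k + 2) q.2 (x * (if s then σBI k else (σBI k)⁻¹))

/-- A stabilization or destabilization of sign `s` of Birman–Menasco classes. -/
def BMStep (s : Bool) (p q : BraidP) : Prop := BMMove s p q ∨ BMMove s q p

/-- A stabilization of sign `s` relating the conjugacy class of `p` to that of `q`: some braid
in the conjugacy class of `p` stabilizes to some braid in the conjugacy class of `q`. -/
def ConjClassMove (s : Bool) (p q : BraidP) : Prop :=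
  ∃ (k : ℕ) (x : BInf), p.1 = k + 1 ∧ q.1 = k + 2 ∧
    x ∈ B (k + 1) ∧ p.2 ∈ B (k + 1) ∧ q.2 ∈ B (k + 2) ∧
    ConjM (k + 1) p.2 x ∧
    ConjM (k + 2) q.2 (x * (if s then σBI k else (σBI k)⁻¹))

/-- A stabilization or destabilization of sign `s` of conjugacy classes. -/
def ConjClassStep (s : Bool) (p q : BraidP) : Prop :=
  ConjClassMove s p q ∨ ConjClassMove s q p
/-- A finite sequence of conjugations. -/
def ConjStar : BraidP → BraidP → Prop :=
  Relation.ReflTransGen (fun p q => p.1 = q.1 ∧ ConjM p.1 p.2 q.2)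

/-- `Z` is obtained from `A` by a finite sequence of moves consisting of conjugations,
exactly one stabilization of sign `s` and exactly one destabilization of sign `s`
(in either order). -/
def OneStabOneDestab (s : Bool) (A Z : BraidP) : Prop :=
  (∃ u v w x, ConjStar A u ∧ StabM s u v ∧ ConjStar v w ∧ StabM s x w ∧ ConjStar x Z) ∨
  (∃ u v w x, ConjStar A u ∧ StabM s v u ∧ ConjStar v w ∧ StabM s w x ∧ ConjStar x Z)

/-!
Let `a = σ_n^ε`, `b = σ_{n+1}^ε`, and let `p`, `q` be braids on `n` strands, which commute with
`b`. Up to conjugation `p * a * q * a⁻¹` is `a * p * a * q * a⁻²`, and stabilizing and permuting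
cyclically gives `q * a⁻² * b * a * p * a`. Conjugate this by `(b * a²)⁻¹`. Conjugation by `a * b`
takes `a` to `b`, and conjugation by `b * a` takes `b` to `a`, so the factor `a⁻²` between `q` and
`p` reappears as `b⁻²` just before `p`, while the factor `a²` from the conjugation reappears as
`b²` just after `p`. These two cancel across `p`, leaving `a⁻² * q * a * p * a * b`, which
destabilizes to a conjugate of `p * a⁻¹ * q * a`. For `ε = -1` this is the exchange move read
backwards.
-/

section Group

variable {G : Type*} [Group G] {a b p q : G}

theorem semiconjBy_of_braid (hab : a * b * a = b * a * b) : SemiconjBy (a * b) a b :=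
  hab.trans (mul_assoc b a b)

theorem braid_inv (hab : a * b * a = b * a * b) :
    a⁻¹ * b⁻¹ * a⁻¹ = b⁻¹ * a⁻¹ * b⁻¹ := by
  simpa only [mul_inv_rev, mul_assoc] using congrArg (·⁻¹) hab

theorem exchange_identity_of_braid (hab : a * b * a = b * a * b) (hp : Commute p b)
    (hq : Commute q b) :
    a⁻¹ * a⁻¹ * b⁻¹ * (q * a⁻¹ * a⁻¹ * b * a * p * a) * b * a * a =
      a⁻¹ * a⁻¹ * q * a * p * a * b := by
  have a_sq_to_b_sq : a * b * (a * a) = b * b * (a * b) :=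
    (semiconjBy_of_braid hab).mul_right (semiconjBy_of_braid hab)
  have b_sq_inv_to_a_sq_inv : b * a * (b * b)⁻¹ = (a * a)⁻¹ * (b * a) :=
    ((semiconjBy_of_braid hab.symm).mul_right (semiconjBy_of_braid hab.symm)).inv_right
  calc
    _ = a⁻¹ * a⁻¹ * (b⁻¹ * q) * ((a * a)⁻¹ * (b * a)) * p * (a * b * (a * a)) := by group
    _ = a⁻¹ * a⁻¹ * (q * b⁻¹) * (b * a * (b * b)⁻¹) * p * (b * b * (a * b)) := by
      rw [hq.inv_right.eq, b_sq_inv_to_a_sq_inv, a_sq_to_b_sq]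
    _ = a⁻¹ * a⁻¹ * q * a * ((b * b)⁻¹ * (p * (b * b))) * (a * b) := by group
    _ = a⁻¹ * a⁻¹ * q * a * p * a * b := by
      rw [(hp.mul_right hp).eq, inv_mul_cancel_left, ← mul_assoc]

theorem isConj_stabilized_of_braid (hab : a * b * a = b * a * b) (hp : Commute p b)
    (hq : Commute q b) :
    IsConj (a * p * a * q * a⁻¹ * a⁻¹ * b) (a⁻¹ * a⁻¹ * q * a * p * a * b) := by
  have cyclic :
      IsConj (a * p * a * q * a⁻¹ * a⁻¹ * b) (q * a⁻¹ * a⁻¹ * b * a * p * a) :=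
    isConj_iff.2 ⟨q * a⁻¹ * a⁻¹ * b, by group⟩
  have exchange :
      IsConj (q * a⁻¹ * a⁻¹ * b * a * p * a) (a⁻¹ * a⁻¹ * q * a * p * a * b) := by
    refine isConj_iff.2 ⟨a⁻¹ * a⁻¹ * b⁻¹, ?_⟩
    simpa only [mul_inv_rev, inv_inv, mul_assoc] using exchange_identity_of_braid hab hp hq
  exact cyclic.trans exchange

end Group

theorem σBI_braid (i : ℕ) :
    σBI i * σBI (i + 1) * σBI i = σBI (i + 1) * σBI i * σBI (i + 1) :=
  PresentedGroup.mk_eq_mk_of_mul_inv_mem (Or.inl ⟨i, rfl⟩)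

theorem commute_σBI {i j : ℕ} (hij : i + 2 ≤ j) : Commute (σBI i) (σBI j) :=
  PresentedGroup.mk_eq_mk_of_mul_inv_mem (Or.inr ⟨i, j, hij, rfl⟩)

theorem B_mono : Monotone B := by
  rintro m n hmn
  refine Subgroup.closure_mono ?_
  rintro x ⟨i, hi, rfl⟩
  exact ⟨i, hi.trans hmn, rfl⟩

theorem σBI_mem_B {i n : ℕ} (hi : i + 2 ≤ n) : σBI i ∈ B n :=
  Subgroup.subset_closure ⟨i, hi, rfl⟩

theorem commute_σBI_of_mem_B {n j : ℕ} {x : BInf} (hx : x ∈ B n) (hnj : n ≤ j) :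
    Commute x (σBI j) := by
  induction hx using Subgroup.closure_induction with
  | mem x hx =>
    obtain ⟨i, hi, rfl⟩ := hx
    exact commute_σBI (hi.trans hnj)
  | one => exact Commute.one_left _
  | mul x y _ _ hx hy => exact hx.mul_left hy
  | inv x _ hx => exact hx.inv_left

/-- The signed Artin generator `σ_k` (`s = true`) or `σ_k⁻¹` (`s = false`), that is, the factor
introduced by a stabilization of sign `s`. -/
def signedσ (s : Bool) (k : ℕ) : BInf := if s then σBI k else (σBI k)⁻¹

theorem signedσ_braid (s : Bool) (k : ℕ) :
    signedσ s k * signedσ s (k + 1) * signedσ s k =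
      signedσ s (k + 1) * signedσ s k * signedσ s (k + 1) := by
  cases s
  · exact braid_inv (σBI_braid k)
  · exact σBI_braid k

theorem signedσ_mem_B (s : Bool) {k n : ℕ} (hk : k + 2 ≤ n) : signedσ s k ∈ B n := by
  cases s
  · exact inv_mem (σBI_mem_B hk)
  · exact σBI_mem_B hk

theorem commute_signedσ_of_mem_B (s : Bool) {n k : ℕ} {x : BInf} (hx : x ∈ B n) (hnk : n ≤ k) :
    Commute x (signedσ s k) := by
  cases s
  · exact (commute_σBI_of_mem_B hx hnk).inv_right
  · exact commute_σBI_of_mem_B hx hnk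

theorem stabM_mul_signedσ (s : Bool) (k : ℕ) (x : BInf) :
    StabM s (k + 1, x) (k + 2, x * signedσ s k) :=
  ⟨k, rfl, rfl, rfl⟩

theorem ConjM.symm {n : ℕ} {x y : BInf} (h : ConjM n x y) : ConjM n y x := by
  obtain ⟨hx, hy, g, hg, rfl⟩ := h
  exact ⟨hy, hx, g⁻¹, inv_mem hg, by group⟩

theorem ConjStar.symm {A Z : BraidP} (h : ConjStar A Z) : ConjStar Z A := by
  induction h with
  | refl => exact .refl
  | tail _ hstep ih => exact .head ⟨hstep.1.symm, hstep.1 ▸ hstep.2.symm⟩ ih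

theorem conjStar_of_isConj {n : ℕ} {x y : B n} (h : IsConj x y) : ConjStar (n, x) (n, y) := by
  obtain ⟨g, rfl⟩ := isConj_iff.1 h
  exact .single ⟨rfl, x.2, (g * x * g⁻¹).2, g, g.2, rfl⟩

theorem OneStabOneDestab.symm {s : Bool} {A Z : BraidP} (h : OneStabOneDestab s A Z) :
    OneStabOneDestab s Z A := by
  obtain ⟨u, v, w, x, hAu, huv, hvw, hxw, hxZ⟩ | ⟨u, v, w, x, hAu, hvu, hvw, hwx, hxZ⟩ := h
  · exact .inl ⟨x, w, v, u, hxZ.symm, hxw, hvw.symm, huv, hAu.symm⟩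
  · exact .inr ⟨x, w, v, u, hxZ.symm, hwx, hvw.symm, hvu, hAu.symm⟩

theorem oneStabOneDestab_of_braid {s : Bool} {k : ℕ} {a p q : B (k + 1)}
    (hab : a * signedσ s k * a = signedσ s k * a * signedσ s k)
    (hp : Commute (p : BInf) (signedσ s k)) (hq : Commute (q : BInf) (signedσ s k)) :
    OneStabOneDestab s (k + 1, p * a * q * a⁻¹) (k + 1, p * a⁻¹ * q * a) := by
  have before_stab : IsConj (p * a * q * a⁻¹) (a * p * a * q * a⁻¹ * a⁻¹) :=
    isConj_iff.2 ⟨a, by group⟩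
  have after_destab : IsConj (a⁻¹ * a⁻¹ * q * a * p * a) (p * a⁻¹ * q * a) :=
    isConj_iff.2 ⟨p * a, by group⟩
  let ι : B (k + 1) →* B (k + 2) := Subgroup.inclusion (B_mono (Nat.le_succ _))
  let b : B (k + 2) := ⟨signedσ s k, signedσ_mem_B s le_rfl⟩
  have stabilized :
      IsConj (ι a * ι p * ι a * ι q * (ι a)⁻¹ * (ι a)⁻¹ * b)
        ((ι a)⁻¹ * (ι a)⁻¹ * ι q * ι a * ι p * ι a * b) :=
    isConj_stabilized_of_braid (Subtype.ext hab) (Subtype.ext hp) (Subtype.ext hq)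
  exact .inl ⟨_, _, _, _, conjStar_of_isConj before_stab, stabM_mul_signedσ s k _,
    conjStar_of_isConj stabilized, stabM_mul_signedσ s k _, conjStar_of_isConj after_destab⟩

theorem oneStabOneDestab_exchange (s : Bool) {k : ℕ} {β₁ β₂ : BInf}
    (h₁ : β₁ ∈ B (k + 1)) (h₂ : β₂ ∈ B (k + 1)) :
    OneStabOneDestab s (k + 2, β₁ * signedσ s k * β₂ * (signedσ s k)⁻¹)
      (k + 2, β₁ * (signedσ s k)⁻¹ * β₂ * signedσ s k) :=
  have hle : B (k + 1) ≤ B (k + 2) := B_mono (Nat.le_succ _)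
  oneStabOneDestab_of_braid (a := ⟨signedσ s k, signedσ_mem_B s le_rfl⟩)
    (p := ⟨β₁, hle h₁⟩) (q := ⟨β₂, hle h₂⟩) (signedσ_braid s k)
    (commute_signedσ_of_mem_B s h₁ le_rfl) (commute_signedσ_of_mem_B s h₂ le_rfl)

/-- **Observation (Birman–Wrinkle).**  For all `β₁, β₂ ∈ ι_n(B_n) ⊆ B_{n+1}` (here
`n = k + 1 ≥ 1`), the braid `β₁ σ_n⁻¹ β₂ σ_n` can be obtained from `β₁ σ_n β₂ σ_n⁻¹` by a
finite sequence of moves consisting of conjugations, exactly one positive stabilization and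
exactly one positive destabilization, and likewise with one negative stabilization and one
negative destabilization; i.e. any exchange move can be decomposed into conjugations, one
stabilization and one destabilization of the same, arbitrarily prescribed, sign.  In the
positive case this is witnessed by the identity
`σ_n⁻² σ_{n+1}⁻¹ ⬝ (β₂ σ_n⁻² σ_{n+1} σ_n β₁ σ_n) ⬝ σ_{n+1} σ_n² = σ_n⁻² β₂ σ_n β₁ σ_n σ_{n+1}`
in `B_{n+2}`  (in our indexing `σ_n = σBI k`, `σ_{n+1} = σBI (k+1)`). -/
theorem exchange_move_decomposition (k : ℕ) (β₁ β₂ : BInf)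
    (h₁ : β₁ ∈ B (k + 1)) (h₂ : β₂ ∈ B (k + 1)) :
    OneStabOneDestab true
        (k + 2, β₁ * σBI k * β₂ * (σBI k)⁻¹) (k + 2, β₁ * (σBI k)⁻¹ * β₂ * σBI k) ∧
    OneStabOneDestab false
        (k + 2, β₁ * σBI k * β₂ * (σBI k)⁻¹) (k + 2, β₁ * (σBI k)⁻¹ * β₂ * σBI k) ∧
    (σBI k)⁻¹ * (σBI k)⁻¹ * (σBI (k + 1))⁻¹ *
        (β₂ * (σBI k)⁻¹ * (σBI k)⁻¹ * σBI (k + 1) * σBI k * β₁ * σBI k) *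
        σBI (k + 1) * σBI k * σBI k =
      (σBI k)⁻¹ * (σBI k)⁻¹ * β₂ * σBI k * β₁ * σBI k * σBI (k + 1) := by
  refine ⟨oneStabOneDestab_exchange true h₁ h₂, ?negative, ?identity⟩
  case negative =>
    simpa only [signedσ, Bool.false_eq_true, if_false, inv_inv] using
      (oneStabOneDestab_exchange false h₁ h₂).symm
  case identity =>
    exact exchange_identity_of_braid (σBI_braid k) (commute_σBI_of_mem_B h₁ le_rfl)
      (commute_σBI_of_mem_B h₂ le_rfl)
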